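/- arXiv:2110.06343 — 3 statements merged into one kernel-verified Lean document; each statement's English description precedes it below -/
import Mathlib

section
/- Let M with bundle map q : M → X be an upper semicontinuous Banach bundle over a Hausdorff space X, and let Γ be a vector space of continuous sections of M such that {f(x) : f ∈ Γ} is dense in the fibre M(x) for every x ∈ X. Let (m_i)_{i ∈ I} be a net in M and let m ∈ M. Then the following are equivalent: (1) m_i → m in M; (2) q(m_i) → q(m) in X and for every ε > 0 there exists g ∈ Γ such that ‖m − g(q(m))‖ < ε and ‖m_i − g(q(m_i))‖ < ε for all sufficiently large i; (3) q(m_i) → q(m) in X and for every f ∈ Γ one has limsup_i ‖m_i − f(q(m_i))‖ ≤ ‖m − f(q(m))‖. -/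
open Filter Topology

structure FibredBanach (X : Type*) (M : Type*) (q : M → X) where
  surj : Function.Surjective q
  normedGroup : ∀ x : X, NormedAddCommGroup {m : M // q m = x}
  normedSpace : ∀ x : X, @NormedSpace ℂ {m : M // q m = x} _ (normedGroup x).toSeminormedAddCommGroup
  complete : ∀ x : X, letI := normedGroup x; CompleteSpace {m : M // q m = x}

namespace FibredBanach

variable {X M : Type*} {q : M → X}

noncomputable def norm (B : FibredBanach X M q) (m : M) : ℝ :=
  letI := B.normedGroup (q m)
  ‖(⟨m, rfl⟩ : {n : M // q n = q m})‖

noncomputable def zeroAt (B : FibredBanach X M q) (x : X) : M :=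
  letI := B.normedGroup x
  ((0 : {n : M // q n = x}) : M)

noncomputable def add (B : FibredBanach X M q) (m m' : M) (h : q m' = q m) : M :=
  letI := B.normedGroup (q m)
  ((((⟨m, rfl⟩ : {n : M // q n = q m}) + (⟨m', h⟩ : {n : M // q n = q m})) : {n : M // q n = q m}) : M)

noncomputable def smul (B : FibredBanach X M q) (c : ℂ) (m : M) : M :=
  letI := B.normedGroup (q m)
  letI := B.normedSpace (q m)
  (((c • (⟨m, rfl⟩ : {n : M // q n = q m})) : {n : M // q n = q m}) : M)

end FibredBanach

structure USCBanachBundle (X : Type*) (M : Type*) [TopologicalSpace X] [TopologicalSpace M]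
    (q : M → X) extends FibredBanach X M q where
  cont : Continuous q
  usc1 : UpperSemicontinuous toFibredBanach.norm
  usc2 : Continuous fun p : {p : M × M // q p.1 = q p.2} =>
    toFibredBanach.add p.1.1 p.1.2 p.2.symm
  usc3 : ∀ c : ℂ, Continuous (toFibredBanach.smul c)
  usc4 : ∀ (l : Filter M) (x : X), Filter.Tendsto q l (nhds x) →
    Filter.Tendsto toFibredBanach.norm l (nhds 0) → l ≤ nhds (toFibredBanach.zeroAt x)

/-- The distance, measured in the Banach fibre `M(q m)`, between a point `m` of the total space
and the value at `q m` of a section `f` of the bundle. -/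
noncomputable def FibredBanach.secDist {X M : Type*} {q : M → X} (B : FibredBanach X M q)
    (m : M) (f : (x : X) → {n : M // q n = x}) : ℝ :=
  letI := B.normedGroup (q m)
  ‖(⟨m, rfl⟩ : {n : M // q n = q m}) - f (q m)‖

/-!
Near a point `m`, the topology of `M` is controlled by the fibre norms: by continuity of addition at
`(m, 0)` and (USC4), points at small fibre distance from a point close to `m` are themselves close
to `m`. If a section `g` is continuous at `q m`, then `g (q (m_i)) → g (q m)`; when `g (q m)` is
close to `m` and `m_i` is close to `g (q (m_i))`, two applications of this principle bring `m_i`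
close to `m`. Conversely, `n ↦ ‖n - g (q n)‖` is upper semicontinuous at `m`, which is exactly the
limsup inequality; a section passing near `m` then turns this inequality into the `ε`-condition.
-/

theorem eventually_lt_of_limsup_ofReal_le {ι : Type*} {l : Filter ι} {u : ι → ℝ} {a ε : ℝ}
    (hε : 0 < ε) (ha : a < ε)
    (hu : limsup (fun i => ENNReal.ofReal (u i)) l ≤ ENNReal.ofReal a) : ∀ᶠ i in l, u i < ε :=
  (eventually_lt_of_limsup_lt (hu.trans_lt ((ENNReal.ofReal_lt_ofReal_iff hε).2 ha))).mono
    fun _ => (ENNReal.ofReal_lt_ofReal_iff hε).1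

namespace FibredBanach

variable {X M : Type*} {q : M → X} (B : FibredBanach X M q)

theorem norm_nonneg (m : M) : 0 ≤ B.norm m :=
  letI := B.normedGroup (q m)
  _root_.norm_nonneg (⟨m, rfl⟩ : {n : M // q n = q m})

theorem norm_coe {x : X} (u : {n : M // q n = x}) :
    B.norm u = (letI := B.normedGroup x; ‖u‖) := by
  obtain ⟨u, rfl⟩ := u
  rfl

theorem norm_zeroAt (x : X) : B.norm (B.zeroAt x) = 0 :=
  letI := B.normedGroup x
  (B.norm_coe 0).trans norm_zero

theorem proj_zeroAt (x : X) : q (B.zeroAt x) = x :=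
  letI := B.normedGroup x
  (0 : {n : M // q n = x}).property

theorem proj_smul (c : ℂ) (m : M) : q (B.smul c m) = q m :=
  letI := B.normedGroup (q m)
  letI := B.normedSpace (q m)
  (c • (⟨m, rfl⟩ : {n : M // q n = q m})).property

theorem add_coe {x : X} (u v : {n : M // q n = x}) :
    B.add u v (v.2.trans u.2.symm) = (letI := B.normedGroup x; u + v : {n : M // q n = x}) := by
  obtain ⟨u, rfl⟩ := u
  rfl

theorem smul_coe (c : ℂ) {x : X} (u : {n : M // q n = x}) :
    B.smul c u =
      (letI := B.normedGroup x; letI := B.normedSpace x; c • u : {n : M // q n = x}) := by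
  obtain ⟨u, rfl⟩ := u
  rfl

theorem add_zeroAt (m : M) : B.add m (B.zeroAt (q m)) (B.proj_zeroAt (q m)) = m :=
  letI := B.normedGroup (q m)
  (B.add_coe ⟨m, rfl⟩ 0).trans (congrArg Subtype.val (add_zero _))

theorem norm_add_neg_one_smul {x : X} (u v : {n : M // q n = x}) :
    B.norm (B.add u (B.smul (-1) v) ((B.proj_smul _ _).trans (v.2.trans u.2.symm))) =
      (letI := B.normedGroup x; ‖u - v‖) := by
  let := B.normedGroup x
  let := B.normedSpace x
  simp only [B.smul_coe, B.add_coe, B.norm_coe, neg_one_smul, sub_eq_add_neg]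

end FibredBanach

namespace USCBanachBundle

variable {X M : Type*} [TopologicalSpace X] [TopologicalSpace M] {q : M → X}
  (B : USCBanachBundle X M q)

theorem tendsto_norm_nhds_zeroAt (x : X) : Tendsto B.norm (𝓝 (B.zeroAt x)) (𝓝 0) := by
  refine tendsto_order.2 ⟨fun a ha => ?_, fun a ha => ?_⟩
  · exact Eventually.of_forall fun m => ha.trans_le (B.norm_nonneg m)
  · exact B.usc1 (B.zeroAt x) a ((B.norm_zeroAt x).trans_lt ha)

theorem nhds_zeroAt (x : X) : 𝓝 (B.zeroAt x) = comap q (𝓝 x) ⊓ comap B.norm (𝓝 0) := by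
  have hproj : Tendsto q (𝓝 (B.zeroAt x)) (𝓝 x) := B.cont.tendsto' _ _ (B.proj_zeroAt x)
  exact le_antisymm (le_inf hproj.le_comap (B.tendsto_norm_nhds_zeroAt x).le_comap)
    (B.usc4 _ x (tendsto_comap.mono_left inf_le_left) (tendsto_comap.mono_left inf_le_right))

theorem hasBasis_nhds_zeroAt (x : X) :
    (𝓝 (B.zeroAt x)).HasBasis (fun p : Set X × ℝ => p.1 ∈ 𝓝 x ∧ 0 < p.2)
      fun p => {b | q b ∈ p.1 ∧ B.norm b < p.2} := by
  rw [B.nhds_zeroAt]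
  convert ((𝓝 x).basis_sets.comap q).inf (Metric.nhds_basis_ball.comap B.norm) using 3 with p
  ext b
  simp [abs_of_nonneg (B.norm_nonneg b)]

theorem exists_nhds_forall_norm_sub_lt_mem {m : M} {U : Set M} (hU : U ∈ 𝓝 m) :
    ∃ V ∈ 𝓝 m, ∃ δ > 0, ∀ (x : X) (u v : {n : M // q n = x}),
      (u : M) ∈ V → (letI := B.normedGroup x; ‖v - u‖ < δ) → (v : M) ∈ U := by
  have hadd := B.usc2.tendsto' ⟨(m, B.zeroAt (q m)), (B.proj_zeroAt (q m)).symm⟩ m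
    (B.add_zeroAt m)
  rw [nhds_subtype_eq_comap, nhds_prod_eq] at hadd
  obtain ⟨⟨V, N, δ⟩, ⟨hV, hN, hδ⟩, hVNδ⟩ :=
    (((𝓝 m).basis_sets.prod (B.hasBasis_nhds_zeroAt (q m))).comap _).mem_iff.1 (hadd hU)
  refine ⟨V ∩ q ⁻¹' N, inter_mem hV (B.cont.continuousAt hN), δ, hδ, fun x u v hu hvu => ?_⟩
  let := B.normedGroup x
  have hq_sub : q (v - u : {n : M // q n = x}) = q u := (v - u).2.trans u.2.symm
  have hmem : B.add u (v - u : {n : M // q n = x}) hq_sub ∈ U :=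
    hVNδ (a := ⟨(u, (v - u : {n : M // q n = x})), hq_sub.symm⟩)
      ⟨hu.1, Set.mem_of_eq_of_mem hq_sub hu.2, (B.norm_coe _).trans_lt hvu⟩
  rwa [B.add_coe, add_sub_cancel] at hmem

theorem upperSemicontinuousAt_secDist {f : (x : X) → {n : M // q n = x}} {m : M}
    (hf : ContinuousAt (fun x => (f x : M)) (q m)) :
    UpperSemicontinuousAt (fun n => B.secDist n f) m := by
  have hproj (n : M) : q n = q (B.smul (-1) (f (q n))) :=
    ((B.proj_smul _ _).trans (f (q n)).2).symm
  have hpair : ContinuousAt (fun n : M =>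
      (⟨(n, B.smul (-1) (f (q n))), hproj n⟩ : {p : M × M // q p.1 = q p.2})) m :=
    IsInducing.subtypeVal.continuousAt_iff.2 <|
      continuousAt_id.prodMk ((B.usc3 (-1)).continuousAt.comp (hf.comp B.cont.continuousAt))
  have hsub : (fun n => B.secDist n f) =
      fun n => B.norm (B.add n (B.smul (-1) (f (q n))) (hproj n).symm) :=
    funext fun n => (B.norm_add_neg_one_smul ⟨n, rfl⟩ (f (q n))).symm
  rw [hsub]
  exact (B.usc1 _).comp (B.usc2.continuousAt.comp hpair)

variable {ι : Type*} {l : Filter ι} {mi : ι → M} {m : M}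

theorem limsup_secDist_le {f : (x : X) → {n : M // q n = x}}
    (hf : ContinuousAt (fun x => (f x : M)) (q m)) (hmi : Tendsto mi l (𝓝 m)) :
    limsup (fun i => ENNReal.ofReal (B.secDist (mi i) f)) l ≤ ENNReal.ofReal (B.secDist m f) :=
  calc limsup (fun i => ENNReal.ofReal (B.secDist (mi i) f)) l
      ≤ limsup (fun n => ENNReal.ofReal (B.secDist n f)) (𝓝 m) :=
        limsup_le_limsup_of_le (f := map mi l) (u := fun n => ENNReal.ofReal (B.secDist n f)) hmi
    _ ≤ ENNReal.ofReal (B.secDist m f) :=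
        (ENNReal.continuous_ofReal.continuousAt.comp_upperSemicontinuousAt
          (B.upperSemicontinuousAt_secDist hf) ENNReal.ofReal_mono).limsup_le

theorem tendsto_of_forall_exists_secDist_lt (hq : Tendsto (fun i => q (mi i)) l (𝓝 (q m)))
    (happrox : ∀ ε > 0, ∃ g : (x : X) → {n : M // q n = x},
      ContinuousAt (fun x => (g x : M)) (q m) ∧
        B.secDist m g < ε ∧ ∀ᶠ i in l, B.secDist (mi i) g < ε) :
    Tendsto mi l (𝓝 m) := by
  refine tendsto_def.2 fun U hU => ?_
  obtain ⟨V, hV, δ, hδ, hVU⟩ := B.exists_nhds_forall_norm_sub_lt_mem hU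
  obtain ⟨W, hW, η, hη, hWV⟩ := B.exists_nhds_forall_norm_sub_lt_mem (interior_mem_nhds.2 hV)
  obtain ⟨g, hg, hgm, hgmi⟩ := happrox (min δ η) (lt_min hδ hη)
  have hg_mem : (g (q m) : M) ∈ interior V := by
    refine hWV (q m) ⟨m, rfl⟩ (g (q m)) (mem_of_mem_nhds hW) ?_
    let := B.normedGroup (q m)
    rw [norm_sub_rev]
    exact hgm.trans_le (min_le_right δ η)
  have hg_near : ∀ᶠ i in l, (g (q (mi i)) : M) ∈ V :=
    (hg.tendsto.comp hq).eventually_mem (mem_interior_iff_mem_nhds.1 hg_mem)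
  filter_upwards [hg_near, hgmi] with i hiV hiδ
  exact hVU (q (mi i)) (g (q (mi i))) ⟨mi i, rfl⟩ hiV (hiδ.trans_le (min_le_left δ η))

end USCBanachBundle

theorem tfae_convergence_USCBanachBundle_general
    {X M : Type*} [TopologicalSpace X] [TopologicalSpace M] {q : M → X} (B : USCBanachBundle X M q)
    (Γ : Set ((x : X) → {m : M // q m = x})) {ι : Type*} (l : Filter ι) (mi : ι → M) (m : M)
    (hΓcont : ∀ f ∈ Γ, ContinuousAt (fun x => (f x : M)) (q m))
    (hΓapprox : ∀ ε > 0, ∃ f ∈ Γ, B.secDist m f < ε) :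
    List.TFAE
      [ Tendsto mi l (𝓝 m),
        Tendsto (fun i => q (mi i)) l (𝓝 (q m)) ∧
          ∀ ε : ℝ, 0 < ε → ∃ g ∈ Γ, B.secDist m g < ε ∧ ∀ᶠ i in l, B.secDist (mi i) g < ε,
        Tendsto (fun i => q (mi i)) l (𝓝 (q m)) ∧
          ∀ f ∈ Γ, limsup (fun i => ENNReal.ofReal (B.secDist (mi i) f)) l ≤
            ENNReal.ofReal (B.secDist m f) ] := by
  tfae_have 1 → 3 := fun hmi =>
    ⟨(B.cont.tendsto m).comp hmi, fun f hf => B.limsup_secDist_le (hΓcont f hf) hmi⟩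
  tfae_have 3 → 2 := by
    rintro ⟨hq, hlimsup⟩
    refine ⟨hq, fun ε hε => ?_⟩
    obtain ⟨f, hf, hfm⟩ := hΓapprox ε hε
    exact ⟨f, hf, hfm, eventually_lt_of_limsup_ofReal_le hε hfm (hlimsup f hf)⟩
  tfae_have 2 → 1 := by
    rintro ⟨hq, happrox⟩
    refine B.tendsto_of_forall_exists_secDist_lt hq fun ε hε => ?_
    obtain ⟨g, hg, hgm, hgmi⟩ := happrox ε hε
    exact ⟨g, hΓcont g hg, hgm, hgmi⟩
  tfae_finish

/-- **Lemma (equivalent characterisations of convergence in a USC Banach bundle).**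
Let `(q : M → X)` be an upper semicontinuous Banach bundle over a Hausdorff space `X` and let
`Γ` be a vector space of continuous sections of `M` (i.e. `Γ` is closed under fibrewise addition
and scalar multiplication) whose values `{f x : f ∈ Γ}` are dense in every fibre `M(x)`.
For a net `(m_i)` in `M` (modelled by `mi : ι → M` and a nontrivial filter `l` on `ι`) and a
point `m ∈ M`, the following are equivalent:
1. `m_i → m` in `M`;
2. `q (m_i) → q m` and for every `ε > 0` there is `g ∈ Γ` with `‖m - g (q m)‖ < ε` and
   `‖m_i - g (q m_i)‖ < ε` for all sufficiently large `i`;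
3. `q (m_i) → q m` and for every `f ∈ Γ`,
   `limsup_i ‖m_i - f (q m_i)‖ ≤ ‖m - f (q m)‖` (computed in `ℝ≥0∞` to avoid junk values). -/
theorem tfae_convergence_USCBanachBundle
    {X M : Type*} [TopologicalSpace X] [TopologicalSpace M] [T2Space X]
    {q : M → X} (B : USCBanachBundle X M q)
    (Γ : Set ((x : X) → {m : M // q m = x}))
    (hΓcont : ∀ f ∈ Γ, Continuous fun x => ((f x : {m : M // q m = x}) : M))
    (hΓadd : ∀ f ∈ Γ, ∀ g ∈ Γ,
      (fun x => letI := B.normedGroup x; f x + g x) ∈ Γ)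
    (hΓsmul : ∀ c : ℂ, ∀ f ∈ Γ,
      (fun x => letI := B.normedGroup x; letI := B.normedSpace x; c • f x) ∈ Γ)
    (hΓdense : ∀ (x : X) (v : {m : M // q m = x}) (ε : ℝ), 0 < ε →
      ∃ f ∈ Γ, (letI := B.normedGroup x; ‖v - f x‖ < ε))
    {ι : Type*} (l : Filter ι) [l.NeBot] (mi : ι → M) (m : M) :
    List.TFAE
      [ Filter.Tendsto mi l (nhds m),
        Filter.Tendsto (fun i => q (mi i)) l (nhds (q m)) ∧
          ∀ ε : ℝ, 0 < ε → ∃ g ∈ Γ,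
            B.secDist m g < ε ∧ ∀ᶠ i in l, B.secDist (mi i) g < ε,
        Filter.Tendsto (fun i => q (mi i)) l (nhds (q m)) ∧
          ∀ f ∈ Γ,
            Filter.limsup (fun i => ENNReal.ofReal (B.secDist (mi i) f)) l ≤
              ENNReal.ofReal (B.secDist m f) ] :=
  tfae_convergence_USCBanachBundle_general B Γ l mi m (fun f hf => (hΓcont f hf).continuousAt)
    (hΓdense (q m) ⟨m, rfl⟩)
end

section
/- Let M with bundle map q_M : M → X and M' with bundle map q_{M'} : M' → X' be two upper semicontinuous Banach bundles, and let ω : X → X' be a homeomorphism. Let Γ be a vector space of continuous sections of M such that the ℂ-linear span of {f(x) : f ∈ Γ} is dense in M(x) for each x ∈ X. Let Φ : M → M' be a map satisfying: (a) for each x ∈ X, Φ(M(x)) ⊆ M'(ω(x)) and the restriction of Φ to M(x) is linear; (b) there exists a constant K > 0 such that ‖Φ(m)‖ ≤ K‖m‖ for all m ∈ M; (c) for each f ∈ Γ, the map Φ ∘ f ∘ ω⁻¹ is a continuous section of M'. Then Φ is continuous. -/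
open Filter Topology

/-!
Call a map `s : Y → M` with `q ∘ s = p` a lift of `p : Y → X`; sections are the lifts of the
identity. The continuous lifts of a continuous `p` form a vector space, their norms are upper
semicontinuous, and they are closed under locally uniform limits. Now `Φ` is itself a lift of
`ω ∘ q`, with `Y = M`, so it suffices to approximate it near each `m₀`. Choose `f` in the span of
`Γ` with `‖m₀ - f (q m₀)‖` small. The identity of `M` and `f ∘ q` are continuous lifts of `q`, so
`‖m - f (q m)‖` stays small for `m` near `m₀`, and boundedness of `Φ` makes the continuous lift
`Φ ∘ f ∘ q` of `ω ∘ q` close to `Φ`.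
-/

theorem exists_mem_span_norm_sub_apply_lt {R ι : Type*} {E : ι → Type*} [Semiring R]
    [∀ i, SeminormedAddCommGroup (E i)] [∀ i, Module R (E i)] {S : Set (∀ i, E i)} {i : ι}
    (hS : Dense (Submodule.span R ((fun f => f i) '' S) : Set (E i))) (v : E i) {ε : ℝ}
    (hε : 0 < ε) : ∃ f ∈ Submodule.span R S, ‖v - f i‖ < ε := by
  obtain ⟨w, hw, hvw⟩ := hS.exists_dist_lt v hε
  have hmap : w ∈ (Submodule.span R S).map (LinearMap.proj i) := by
    rwa [Submodule.map_span]
  obtain ⟨f, hf, rfl⟩ := hmap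
  exact ⟨f, hf, by rwa [← dist_eq_norm]⟩

namespace FibredBanach

variable {X M : Type*} {q : M → X}

/-- The fibre `M(x)`, as a type that remembers the bundle `B`, so that the Banach space structure
supplied by `B` can be found by instance search. -/
def Fibre (_B : FibredBanach X M q) (x : X) : Type _ := {m : M // q m = x}

noncomputable instance (B : FibredBanach X M q) (x : X) : NormedAddCommGroup (B.Fibre x) :=
  B.normedGroup x

noncomputable instance (B : FibredBanach X M q) (x : X) : NormedSpace ℂ (B.Fibre x) :=
  B.normedSpace x

variable (B : FibredBanach X M q) {x : X}

theorem norm_val (u : B.Fibre x) : B.norm u.1 = ‖u‖ := by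
  obtain ⟨m, rfl⟩ := u
  rfl

theorem add_val (u v : B.Fibre x) : B.add u.1 v.1 (v.2.trans u.2.symm) = (u + v).1 := by
  obtain ⟨m, rfl⟩ := u
  rfl

theorem smul_val (c : ℂ) (u : B.Fibre x) : B.smul c u.1 = (c • u).1 := by
  obtain ⟨m, rfl⟩ := u
  rfl

/-- The restriction of a map `Φ : M → M'` covering `ω` to a map of fibres `M(x) → M'(ω(x))`. -/
def restrictFibre {X' M' : Type*} {q' : M' → X'} (B' : FibredBanach X' M' q') {ω : X → X'}
    (Φ : M → M') (hΦ : ∀ m, q' (Φ m) = ω (q m)) (x : X) (v : B.Fibre x) : B'.Fibre (ω x) :=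
  ⟨Φ v.1, (hΦ v.1).trans (congrArg ω v.2)⟩

end FibredBanach

namespace USCBanachBundle

variable {X M Y Z : Type*} [TopologicalSpace X] [TopologicalSpace M] [TopologicalSpace Y]
  [TopologicalSpace Z] {q : M → X} (B : USCBanachBundle X M q)

theorem continuous_zero_lift (p : C(Y, X)) :
    Continuous fun y => (0 : B.Fibre (p y)).1 := by
  refine continuous_iff_continuousAt.2 fun y₀ => B.usc4 _ (p y₀) ?_ ?_
  · exact tendsto_map'_iff.2 <|
      (p.continuous.tendsto y₀).congr fun y => (0 : B.Fibre (p y)).2.symm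
  · exact tendsto_map'_iff.2 <| tendsto_const_nhds.congr fun y =>
      ((B.norm_val (0 : B.Fibre (p y))).trans norm_zero).symm

variable {B} in
theorem continuous_add_lift {p : Y → X} {s t : ∀ y, B.Fibre (p y)}
    (hs : Continuous fun y => (s y).1) (ht : Continuous fun y => (t y).1) :
    Continuous fun y => (s y + t y).1 :=
  (B.usc2.comp ((hs.prodMk ht).subtype_mk fun y => (s y).2.trans (t y).2.symm)).congr
    fun y => B.add_val (s y) (t y)

/-- The vector space of continuous lifts of `p : Y → X` through the bundle map `q`. For `p = id`
these are the continuous sections. -/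
noncomputable def continuousLifts (p : C(Y, X)) : Submodule ℂ (∀ y, B.Fibre (p y)) where
  carrier := {s | Continuous fun y => (s y).1}
  zero_mem' := B.continuous_zero_lift p
  add_mem' := continuous_add_lift
  smul_mem' c s hs := ((B.usc3 c).comp hs).congr fun y => B.smul_val c (s y)

variable {B} {p : C(Y, X)}

theorem mem_continuousLifts {s : ∀ y, B.Fibre (p y)} :
    s ∈ B.continuousLifts p ↔ Continuous fun y => (s y).1 :=
  Iff.rfl

theorem comp_mem_continuousLifts {s : ∀ y, B.Fibre (p y)} (hs : s ∈ B.continuousLifts p)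
    (g : C(Z, Y)) : (fun z => s (g z)) ∈ B.continuousLifts (p.comp g) :=
  (mem_continuousLifts.1 hs).comp g.continuous

variable (B) in
theorem tautological_mem_continuousLifts :
    (fun m => ⟨m, rfl⟩ : ∀ m, B.Fibre (q m)) ∈ B.continuousLifts ⟨q, B.cont⟩ :=
  continuous_id

theorem upperSemicontinuous_norm_lift {s : ∀ y, B.Fibre (p y)}
    (hs : s ∈ B.continuousLifts p) : UpperSemicontinuous fun y => ‖s y‖ := by
  simpa only [Function.comp_def, B.norm_val] using B.usc1.comp (mem_continuousLifts.1 hs)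

theorem exists_norm_lt_imp_mem {x : X} {W : Set M} (hW : W ∈ 𝓝 (0 : B.Fibre x).1) :
    ∃ N ∈ 𝓝 x, ∃ δ > 0, ∀ y ∈ N, ∀ v : B.Fibre y, ‖v‖ < δ → v.1 ∈ W := by
  have hle : comap q (𝓝 x) ⊓ comap B.norm (𝓝 0) ≤ 𝓝 (0 : B.Fibre x).1 :=
    B.usc4 _ x (tendsto_comap.mono_left inf_le_left) (tendsto_comap.mono_left inf_le_right)
  obtain ⟨⟨N, δ⟩, ⟨hN, hδ⟩, hsub⟩ :=
    (((𝓝 x).basis_sets.comap q).inf (Metric.nhds_basis_ball.comap B.norm)).mem_iff.1 (hle hW)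
  refine ⟨N, hN, δ, hδ, fun y hy v hv => hsub ⟨?_, ?_⟩⟩
  · rwa [← v.2] at hy
  · simpa [B.norm_val] using hv

theorem exists_isOpen_add_mem {x : X} (u₀ : B.Fibre x) {U : Set M} (hU : U ∈ 𝓝 u₀.1) :
    ∃ V : Set M, IsOpen V ∧ u₀.1 ∈ V ∧ ∃ δ > 0,
      ∀ (y : X) (u v : B.Fibre y), u.1 ∈ V → ‖v‖ < δ → (u + v).1 ∈ U := by
  have hadd : B.add u₀.1 (0 : B.Fibre x).1 ((0 : B.Fibre x).2.trans u₀.2.symm) = u₀.1 := by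
    rw [B.add_val, add_zero]
  have hpre := B.usc2.continuousAt
    (x := ⟨(u₀.1, (0 : B.Fibre x).1), u₀.2.trans (0 : B.Fibre x).2.symm⟩)
    (show U ∈ 𝓝 _ by simpa only [hadd] using hU)
  rw [mem_map, nhds_subtype_eq_comap, mem_comap] at hpre
  obtain ⟨S, hS, hSU⟩ := hpre
  obtain ⟨V, hV, W, hW, hVW⟩ := mem_nhds_prod_iff.1 hS
  obtain ⟨N, hN, δ, hδ, hNW⟩ := exists_norm_lt_imp_mem hW
  have hqN : q ⁻¹' N ∈ 𝓝 u₀.1 := B.cont.continuousAt (by rwa [u₀.2])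
  obtain ⟨V', hV', hVo, huV⟩ := mem_nhds_iff.1 (inter_mem hV hqN)
  refine ⟨V', hVo, huV, δ, hδ, fun y u v hu hv => ?_⟩
  have hyN : y ∈ N := by simpa only [Set.mem_preimage, u.2] using (hV' hu).2
  have hmem : (u.1, v.1) ∈ S := hVW ⟨(hV' hu).1, hNW y hyN v hv⟩
  rw [← B.add_val]
  exact @hSU ⟨(u.1, v.1), u.2.trans v.2.symm⟩ hmem

theorem mem_continuousLifts_of_locally_uniform_approx {s : ∀ y, B.Fibre (p y)}
    (happrox : ∀ y₀, ∀ ε > 0, ∃ t ∈ B.continuousLifts p, ∀ᶠ y in 𝓝 y₀, ‖s y - t y‖ < ε) :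
    s ∈ B.continuousLifts p := by
  refine continuous_iff_continuousAt.2 fun y₀ U hU => ?_
  obtain ⟨V, hVo, hsV, δ, hδ, hVU⟩ := exists_isOpen_add_mem (s y₀) hU
  obtain ⟨V', -, hsV', δ', hδ', hV'V⟩ := exists_isOpen_add_mem (s y₀) (hVo.mem_nhds hsV)
  obtain ⟨t, ht, hst⟩ := happrox y₀ (min δ δ') (lt_min hδ hδ')
  have htV : (t y₀).1 ∈ V := by
    have hsmall : ‖t y₀ - s y₀‖ < δ' := by
      rw [norm_sub_rev]
      exact hst.self_of_nhds.trans_le (min_le_right _ _)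
    simpa only [add_sub_cancel] using hV'V _ (s y₀) (t y₀ - s y₀) hsV' hsmall
  have htV_eventually : ∀ᶠ y in 𝓝 y₀, (t y).1 ∈ V :=
    (mem_continuousLifts.1 ht).continuousAt.eventually (hVo.mem_nhds htV)
  rw [mem_map]
  filter_upwards [hst, htV_eventually] with y hsty htyV
  simpa only [Set.mem_preimage, add_sub_cancel] using
    hVU _ (t y) (s y - t y) htyV (hsty.trans_le (min_le_left _ _))

theorem map_mem_continuousLifts_of_mem_span {E : Y → Type*} [∀ y, AddCommMonoid (E y)]
    [∀ y, Module ℂ (E y)] {φ : ∀ y, E y →ₗ[ℂ] B.Fibre (p y)} {S : Set (∀ y, E y)}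
    (hS : ∀ f ∈ S, (fun y => φ y (f y)) ∈ B.continuousLifts p)
    {f : ∀ y, E y} (hf : f ∈ Submodule.span ℂ S) :
    (fun y => φ y (f y)) ∈ B.continuousLifts p :=
  (Submodule.span_le (p := (B.continuousLifts p).comap
    (LinearMap.pi fun y => φ y ∘ₗ LinearMap.proj y))).2 hS hf

theorem eventually_norm_map_sub_map_lt {F : X → Type*} [∀ x, SeminormedAddCommGroup (F x)]
    [∀ x, Module ℂ (F x)] {φ : ∀ x, B.Fibre x →ₗ[ℂ] F x}
    {s t : ∀ y, B.Fibre (p y)} (hs : s ∈ B.continuousLifts p) (ht : t ∈ B.continuousLifts p)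
    {y₀ : Y} {K δ ε : ℝ} (hφ : ∀ᶠ x in 𝓝 (p y₀), ∀ v : B.Fibre x, ‖φ x v‖ ≤ K * ‖v‖)
    (hKδ : |K| * δ < ε) (hst : ‖s y₀ - t y₀‖ < δ) :
    ∀ᶠ y in 𝓝 y₀, ‖φ (p y) (s y) - φ (p y) (t y)‖ < ε := by
  have hclose : ∀ᶠ y in 𝓝 y₀, ‖s y - t y‖ < δ :=
    upperSemicontinuous_norm_lift (sub_mem hs ht) y₀ δ hst
  filter_upwards [hclose, p.continuous.continuousAt.eventually hφ] with y hy hφy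
  calc ‖φ (p y) (s y) - φ (p y) (t y)‖
      = ‖φ (p y) (s y - t y)‖ := by rw [map_sub]
    _ ≤ K * ‖s y - t y‖ := hφy _
    _ ≤ |K| * δ := mul_le_mul (le_abs_self K) hy.le (norm_nonneg _) (abs_nonneg K)
    _ < ε := hKδ

end USCBanachBundle

open USCBanachBundle

theorem continuous_of_fibrewise_linear_bounded_sections_general
    {X X' M M' : Type*} [TopologicalSpace X] [TopologicalSpace X']
    [TopologicalSpace M] [TopologicalSpace M'] {q : M → X} {q' : M' → X'}
    (B : USCBanachBundle X M q) (B' : USCBanachBundle X' M' q') (ω : C(X, X'))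
    (Γ : Set (∀ x, B.Fibre x)) (hΓcont : ∀ f ∈ Γ, Continuous fun x => (f x).1)
    (hΓdense : ∀ x, Dense (Submodule.span ℂ ((fun f => f x) '' Γ) : Set (B.Fibre x)))
    (Φ : M → M') (hfib : ∀ m, q' (Φ m) = ω (q m))
    (hlin : ∀ x, IsLinearMap ℂ (B.restrictFibre B'.toFibredBanach Φ hfib x))
    (hbound : ∀ x₀, ∃ K : ℝ, ∀ᶠ x in 𝓝 x₀, ∀ v : B.Fibre x, B'.norm (Φ v.1) ≤ K * B.norm v.1)
    (hsec : ∀ f ∈ Γ, Continuous fun x => Φ (f x).1) :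
    Continuous Φ := by
  let φ : ∀ x, B.Fibre x →ₗ[ℂ] B'.Fibre (ω x) := fun x => (hlin x).mk'
  let qC : C(M, X) := ⟨q, B.cont⟩
  suffices h : (fun m => φ (q m) ⟨m, rfl⟩) ∈ B'.continuousLifts (ω.comp qC) from h
  refine mem_continuousLifts_of_locally_uniform_approx fun m₀ ε hε => ?_
  obtain ⟨K, hK⟩ := hbound (q m₀)
  obtain ⟨δ, hδ, hKδ⟩ := exists_pos_mul_lt hε |K|
  obtain ⟨f, hf, hfm₀⟩ := exists_mem_span_norm_sub_apply_lt (hΓdense (q m₀)) ⟨m₀, rfl⟩ hδ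
  have hf_cont : f ∈ B.continuousLifts (.id X) :=
    (Submodule.span_le (p := B.continuousLifts (.id X))).2 hΓcont hf
  have hφf_cont : (fun x => φ x (f x)) ∈ B'.continuousLifts ω :=
    map_mem_continuousLifts_of_mem_span hsec hf
  have hφ : ∀ᶠ x in 𝓝 (qC m₀), ∀ v : B.Fibre x, ‖φ x v‖ ≤ K * ‖v‖ :=
    hK.mono fun x hx v => by
      rw [← B.norm_val, ← B'.norm_val]
      exact hx v
  exact ⟨_, comp_mem_continuousLifts hφf_cont qC, eventually_norm_map_sub_map_lt
    B.tautological_mem_continuousLifts (comp_mem_continuousLifts hf_cont qC) hφ hKδ hfm₀⟩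

/-- **Proposition (continuity criterion for fibrewise-linear bundle maps; cf. Fell–Doran II.13.16
for USC Banach bundles).**
Let `(q_M : M → X)` and `(q_{M'} : M' → X')` be upper semicontinuous Banach bundles and
`ω : X ≃ₜ X'` a homeomorphism.  Let `Γ` be a vector space of continuous sections of `M` whose
`ℂ`-linear span of values is dense in each fibre `M(x)`.  Let `Φ : M → M'` satisfy:
(a) `Φ` maps `M(x)` into `M'(ω x)` linearly; (b) `‖Φ m‖ ≤ K ‖m‖` for a constant `K > 0`;
(c) for each `f ∈ Γ`, `Φ ∘ f ∘ ω⁻¹` is a continuous section of `M'`.  Then `Φ` is continuous. -/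
theorem continuous_of_fibrewise_linear_bounded_sections
    {X X' M M' : Type*} [TopologicalSpace X] [TopologicalSpace X']
    [TopologicalSpace M] [TopologicalSpace M']
    {qM : M → X} {qM' : M' → X'}
    (B : USCBanachBundle X M qM) (B' : USCBanachBundle X' M' qM')
    (ω : X ≃ₜ X')
    (Γ : Set ((x : X) → {m : M // qM m = x}))
    (hΓcont : ∀ f ∈ Γ, Continuous fun x => ((f x : {m : M // qM m = x}) : M))
    (hΓadd : ∀ f ∈ Γ, ∀ g ∈ Γ,
      (fun x => letI := B.normedGroup x; f x + g x) ∈ Γ)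
    (hΓsmul : ∀ c : ℂ, ∀ f ∈ Γ,
      (fun x => letI := B.normedGroup x; letI := B.normedSpace x; c • f x) ∈ Γ)
    (hΓdense : ∀ (x : X) (v : {m : M // qM m = x}) (ε : ℝ), 0 < ε →
      (letI := B.normedGroup x; letI := B.normedSpace x;
        ∃ w ∈ Submodule.span ℂ {u : {m : M // qM m = x} | ∃ f ∈ Γ, f x = u}, ‖v - w‖ < ε))
    (Φ : M → M')
    (hfib : ∀ m : M, qM' (Φ m) = ω (qM m))
    (hlin : ∀ x : X,
      (letI := B.normedGroup x; letI := B.normedSpace x;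
       letI := B'.normedGroup (ω x); letI := B'.normedSpace (ω x);
       IsLinearMap ℂ (fun v : {m : M // qM m = x} =>
         (⟨Φ v.1, by rw [hfib, v.2]⟩ : {m' : M' // qM' m' = ω x}))))
    (K : ℝ) (hK : 0 < K)
    (hbound : ∀ m : M, B'.norm (Φ m) ≤ K * B.norm m)
    (hsec : ∀ f ∈ Γ, Continuous (fun x' : X' => Φ ((f (ω.symm x') : {m : M // qM m = ω.symm x'}) : M)) ∧
      ∀ x' : X', qM' (Φ ((f (ω.symm x') : {m : M // qM m = ω.symm x'}) : M)) = x') :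
    Continuous Φ :=
  continuous_of_fibrewise_linear_bounded_sections_general B B' ω Γ hΓcont
    (fun x v => SeminormedAddCommGroup.mem_closure_iff.2 (hΓdense x v)) Φ hfib hlin
    (fun _ => ⟨K, .of_forall fun _ v => hbound v.1⟩)
    fun f hf => ω.symm.comp_continuous_iff'.1 (hsec f hf).1
end

section
/- Let X and Z be topological spaces, let s : X → Z be a continuous open map, and let W ⊆ X × X be an open set. Define a relation on X by x ∼ x' if and only if s(x) = s(x') and (x,x') ∈ W, and assume that ∼ is an equivalence relation on X. Then the quotient map π : X → X/∼ is an open map. -/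
/-!
The second projection of the fibred product `X ×_Z X` of `s` with itself is a base change of the
open map `s`, hence open. The saturation of an open set `U ⊆ X` is the image under this projection
of the open set of pairs in `X ×_Z X` that lie in `W` and have first component in `U`.
-/

open Function

theorem image_pullback_snd_preimage_val {X Y Z : Type*} (f : X → Z) (g : Y → Z) (W : Set (X × Y)) :
    Pullback.snd '' (Subtype.val ⁻¹' W : Set (f.Pullback g)) =
      (fun y ↦ (g y, y)) ⁻¹' (Prod.map f id '' W) := by
  ext y
  constructor
  · rintro ⟨⟨⟨x, y⟩, hxy⟩, hW, rfl⟩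
    exact ⟨(x, y), hW, Prod.ext hxy rfl⟩
  · rintro ⟨⟨x, y'⟩, hW, hxy⟩
    obtain ⟨hx, rfl⟩ := Prod.mk.inj hxy
    exact ⟨⟨(x, y'), hx⟩, hW, rfl⟩

theorem isOpenMap_pullback_snd {X Y Z : Type*} [TopologicalSpace X] [TopologicalSpace Y]
    [TopologicalSpace Z] {f : X → Z} {g : Y → Z} (hf : IsOpenMap f) (hg : Continuous g) :
    IsOpenMap (Pullback.snd : f.Pullback g → Y) := by
  intro V hV
  obtain ⟨W, hW, rfl⟩ := isOpen_induced_iff.mp hV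
  rw [image_pullback_snd_preimage_val]
  exact (hf.prodMap .id W hW).preimage (hg.prodMk continuous_id)

theorem quotient_mk_preimage_image_eq_image_pullback_snd {X Z : Type*} {s : X → Z}
    {W : Set (X × X)} {r : Setoid X} (hr : ∀ x x', r x x' ↔ s x = s x' ∧ (x, x') ∈ W)
    (U : Set X) :
    Quotient.mk r ⁻¹' (Quotient.mk r '' U) =
      Pullback.snd '' (Subtype.val ⁻¹' (W ∩ Prod.fst ⁻¹' U) : Set (s.Pullback s)) := by
  ext y
  constructor
  · rintro ⟨x, hxU, hxy⟩
    obtain ⟨hs, hW⟩ := (hr x y).mp (Quotient.exact hxy)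
    exact ⟨⟨(x, y), hs⟩, ⟨hW, hxU⟩, rfl⟩
  · rintro ⟨⟨⟨x, y⟩, hs⟩, ⟨hW, hxU⟩, rfl⟩
    exact ⟨x, hxU, Quotient.sound ((hr x y).mpr ⟨hs, hW⟩)⟩

/-- **Lemma (openness of the quotient map of a pre-equivalence).**
Let `s : X → Z` be a continuous open map and `W ⊆ X × X` an open set.  Suppose the relation
`x ∼ x' ↔ (s x = s x' ∧ (x,x') ∈ W)` is an equivalence relation on `X`.  Then the quotient map
`π : X → X/∼` (with the quotient topology on `X/∼`) is an open map. -/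
theorem isOpenMap_quotient_mk_of_open_graph
    {X Z : Type*} [TopologicalSpace X] [TopologicalSpace Z]
    (s : X → Z) (hsc : Continuous s) (hso : IsOpenMap s)
    (W : Set (X × X)) (hW : IsOpen W)
    (r : Setoid X) (hr : ∀ x x' : X, r.r x x' ↔ (s x = s x' ∧ (x, x') ∈ W)) :
    IsOpenMap (Quotient.mk r) := by
  intro U hU
  have isOpen_pairs : IsOpen (W ∩ Prod.fst ⁻¹' U) := hW.inter (hU.preimage continuous_fst)
  have isOpen_saturation : IsOpen (Quotient.mk r ⁻¹' (Quotient.mk r '' U)) := by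
    rw [quotient_mk_preimage_image_eq_image_pullback_snd hr]
    exact isOpenMap_pullback_snd hso hsc _ (isOpen_pairs.preimage continuous_subtype_val)
  exact isQuotientMap_quotient_mk'.isOpen_preimage.mp isOpen_saturation
end
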